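/- Let K = n, M = ⌈n^α⌉, r = ⌈n^β⌉ with constants 0 < α, β < 1/2 satisfying α + 2β ≥ 1 + 2·log log n/log n, under the Uniform popularity distribution. Then with high probability over the cache placement (in particular on the event that the placement is ((1−α)/3, μ)-good for a constant μ and that every node w and file j have F_j(w) = Θ(r²M/n) cached replicas of W_j in B_r(w)), for every edge (u,v) of the configuration graph H, the conditional probability, given the placement, that a single request of Strategy II selects the pair {u,v} as its two candidate servers is O(1/e(H)). -/

import Mathlib

open scoped Classical BigOperators
open Filter

/-- Nodes of the `m × m` torus grid (a `√n × √n` grid with wrap-around, `n = m²`). -/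
abbrev Node (m : ℕ) := Fin m × Fin m

/-- Wrap-around distance between two coordinates in `Fin m`. -/
def cdist {m : ℕ} (a b : Fin m) : ℕ :=
  min ((a.val + m - b.val) % m) ((b.val + m - a.val) % m)

/-- Graph (shortest-path) distance on the torus grid. -/
def torusDist {m : ℕ} (u v : Node m) : ℕ := cdist u.1 v.1 + cdist u.2 v.2

/-- A cache placement: each of the `m²` nodes fills `M` cache slots with files from a
library of `K` files.  Under the Uniform popularity distribution the random placement
is uniform over all such functions (each slot i.i.d. uniform on the `K` files). -/
abbrev Placement (m M K : ℕ) := Node m → Fin M → Fin K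

/-- Node `u` has cached file `j`. -/
def cached {m M K : ℕ} (ω : Placement m M K) (u : Node m) (j : Fin K) : Prop :=
  ∃ i, ω u i = j

/-- Probability of an event under the uniform measure on a finite type. -/
noncomputable def unifProb {Ω : Type*} [Fintype Ω] (E : Set Ω) : ℝ :=
  ((Finset.univ.filter (fun ω => ω ∈ E)).card : ℝ) / (Fintype.card Ω : ℝ)

/-- The set of candidate servers for a request at `w` for file `j` with proximity
radius `r`: the nodes within graph distance `r` of `w` that cached file `j`. -/
noncomputable def candSet {m M K : ℕ} (ω : Placement m M K) (w : Node m) (j : Fin K)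
    (r : ℕ) : Finset (Node m) :=
  Finset.univ.filter fun v => cached ω v j ∧ torusDist w v ≤ r

/-- `F_j(w)`: the number of nodes within distance `r` of `w` that cached file `j`. -/
noncomputable def Fcount {m M K : ℕ} (ω : Placement m M K) (r : ℕ) (w : Node m)
    (j : Fin K) : ℕ :=
  (candSet ω w j r).card

/-- `t(u)`: the number of distinct files cached at node `u`. -/
noncomputable def tOne {m M K : ℕ} (ω : Placement m M K) (u : Node m) : ℕ :=
  (Finset.univ.image (ω u)).card

/-- `t(u,v)`: the number of distinct files cached at both `u` and `v`. -/
noncomputable def tTwo {m M K : ℕ} (ω : Placement m M K) (u v : Node m) : ℕ :=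
  (Finset.univ.image (ω u) ∩ Finset.univ.image (ω v)).card

/-- A placement is `(δ,μ)`-good if every node caches at least `δ·M` distinct files and
every pair of distinct nodes shares fewer than `μ` distinct files. -/
def goodPlacement {m M K : ℕ} (δ : ℝ) (μ : ℕ) (ω : Placement m M K) : Prop :=
  (∀ u, δ * (M : ℝ) ≤ (tOne ω u : ℝ)) ∧ ∀ u v, u ≠ v → tTwo ω u v < μ

/-- Adjacency in the configuration graph `H` with radius `r`. -/
def adjH {m M K : ℕ} (ω : Placement m M K) (r : ℕ) (u v : Node m) : Prop :=
  u ≠ v ∧ (∃ j, cached ω u j ∧ cached ω v j) ∧ torusDist u v ≤ 2 * r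

/-- Degree of `u` in the configuration graph `H`. -/
noncomputable def degH {m M K : ℕ} (ω : Placement m M K) (r : ℕ) (u : Node m) : ℕ :=
  (Finset.univ.filter fun v => adjH ω r u v).card

/-- Number of edges of the configuration graph `H`. -/
noncomputable def eH {m M K : ℕ} (ω : Placement m M K) (r : ℕ) : ℝ :=
  (∑ u : Node m, (degH ω r u : ℝ)) / 2

/-- Given the placement `ω`, the conditional probability that a single request of
Strategy II — uniform origin `w`, uniform file `j`, two candidates drawn uniformly
from the caches of `W_j` within distance `r` of `w` — selects the pair `{u,v}` as its
two candidate servers. -/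
noncomputable def selectProb {m M K : ℕ} (ω : Placement m M K) (r : ℕ)
    (u v : Node m) : ℝ :=
  (∑ w : Node m, ∑ j : Fin K,
      if u ∈ candSet ω w j r ∧ v ∈ candSet ω w j r then
        2 / ((candSet ω w j r).card : ℝ) ^ 2
      else 0) / (((m ^ 2 : ℕ) : ℝ) * (K : ℝ))

/-- Cache size `M = ⌈n^α⌉`. -/
noncomputable def Mf (α : ℝ) (n : ℕ) : ℕ := ⌈(n : ℝ) ^ α⌉₊

/-- Proximity radius `r = ⌈n^β⌉`. -/
noncomputable def rf (β : ℝ) (n : ℕ) : ℕ := ⌈(n : ℝ) ^ β⌉₊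


section generic

variable {Ω : Type*} [Fintype Ω]

lemma unifProb_eq_sum (E : Set Ω) :
    unifProb E = (∑ ω, if ω ∈ E then (1:ℝ) else 0) / (Fintype.card Ω : ℝ) := by
  unfold unifProb
  rw [Finset.sum_boole]

lemma unifProb_nonneg (E : Set Ω) : 0 ≤ unifProb E := by
  unfold unifProb; positivity

lemma unifProb_mono {E F : Set Ω} (h : E ⊆ F) : unifProb E ≤ unifProb F := by
  unfold unifProb
  gcongr

lemma unifProb_union_le (E F : Set Ω) : unifProb (E ∪ F) ≤ unifProb E + unifProb F := by
  rw [unifProb_eq_sum, unifProb_eq_sum, unifProb_eq_sum, ← add_div, ← Finset.sum_add_distrib]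
  gcongr with ω
  by_cases h1 : ω ∈ E <;> by_cases h2 : ω ∈ F <;> simp [h1, h2]

lemma unifProb_exists_le {ι : Type*} [Fintype ι] (P : ι → Ω → Prop) :
    unifProb {ω | ∃ i, P i ω} ≤ ∑ i, unifProb {ω | P i ω} := by
  simp only [unifProb_eq_sum]
  rw [← Finset.sum_div, Finset.sum_comm]
  gcongr with ω
  simp only [Set.mem_ofPred_eq]
  by_cases h : ∃ i, P i ω
  · obtain ⟨i, hi⟩ := h
    rw [if_pos ⟨i, hi⟩]
    have := Finset.single_le_sum (f := fun i => if P i ω then (1:ℝ) else 0)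
      (fun j _ => by split_ifs <;> simp) (Finset.mem_univ i)
    simpa [hi] using this
  · rw [if_neg h]
    exact Finset.sum_nonneg fun j _ => by split_ifs <;> simp

lemma unifProb_exists_le_card {ι : Type*} [Fintype ι] (P : ι → Ω → Prop) (q : ℝ)
    (h : ∀ i, unifProb {ω | P i ω} ≤ q) :
    unifProb {ω | ∃ i, P i ω} ≤ (Fintype.card ι : ℝ) * q := by
  refine (unifProb_exists_le P).trans ?_
  refine (Finset.sum_le_sum fun i _ => h i).trans ?_
  simp

lemma unifProb_markov (f : Ω → ℝ) (hf : ∀ ω, 0 ≤ f ω) (t : ℝ) (ht : 0 < t) :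
    unifProb {ω | t ≤ f ω} ≤ ((∑ ω, f ω) / (Fintype.card Ω : ℝ)) / t := by
  rw [unifProb_eq_sum, div_right_comm, Finset.sum_div _ _ t]
  have key : ∀ ω, (if ω ∈ {ω | t ≤ f ω} then (1:ℝ) else 0) ≤ f ω / t := by
    intro ω
    simp only [Set.mem_ofPred_eq]
    split_ifs with h
    · rwa [le_div_iff₀ ht, one_mul]
    · exact div_nonneg (hf ω) ht.le
  have h2 := Finset.sum_le_sum (s := Finset.univ) fun ω _ => key ω
  exact div_le_div_of_nonneg_right h2 (by positivity)

lemma unifProb_compl_eq [Nonempty Ω] (P : Ω → Prop) :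
    unifProb {ω | P ω} = 1 - unifProb {ω | ¬ P ω} := by
  rw [unifProb, unifProb, eq_sub_iff_add_eq, ← add_div, ← Nat.cast_add]
  have : (Fintype.card Ω : ℝ) ≠ 0 := by simp
  rw [div_eq_one_iff_eq this]
  norm_cast
  simp only [Set.mem_ofPred_eq]
  rw [Finset.card_filter_add_card_filter_not]
  simp

end generic

lemma avg_prod {ι X : Type*} [Fintype ι] [DecidableEq ι] [Fintype X] (g : ι → X → ℝ) :
    (∑ ω : ι → X, ∏ i, g i (ω i)) / (Fintype.card (ι → X) : ℝ)
      = ∏ i, ((∑ x, g i x) / (Fintype.card X : ℝ)) := by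
  rw [Finset.prod_div_distrib, Finset.prod_univ_sum]
  simp

lemma unifProb_single {ι X : Type*} [Fintype ι] [DecidableEq ι] [Fintype X] [Nonempty X] (u : ι) (S : X → Prop) :
    unifProb {ω : ι → X | S (ω u)} = unifProb {x | S x} := by
  have h := avg_prod (fun (i : ι) (x : X) => if i = u then (if S x then (1:ℝ) else 0) else 1)
  rw [unifProb_eq_sum, unifProb_eq_sum]
  have e1 : ∀ ω : ι → X, (∏ i, if i = u then (if S (ω i) then (1:ℝ) else 0) else 1)
      = if S (ω u) then 1 else 0 := by
    intro ω
    rw [Finset.prod_ite_eq' Finset.univ u (fun i => if S (ω i) then (1:ℝ) else 0)]; simp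
  simp only [e1] at h
  simp only [Set.mem_ofPred_eq]
  rw [h]
  rw [Finset.prod_eq_single u]
  · simp
  · intro b _ hb; simp [hb]
  · simp

lemma unifProb_pair {ι X : Type*} [Fintype ι] [DecidableEq ι] [Fintype X] [Nonempty X] (u v : ι) (huv : u ≠ v)
    (Q : X → X → Prop) (q : ℝ) (hq : ∀ x, unifProb {y | Q x y} ≤ q) :
    unifProb {ω : ι → X | Q (ω u) (ω v)} ≤ q := by
  have key : ∀ x, unifProb {ω : ι → X | ω u = x ∧ Q x (ω v)} ≤ (1 / (Fintype.card X : ℝ)) * q := by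
    intro x
    have h := avg_prod (fun (i : ι) (y : X) =>
      (if i = u then (if y = x then (1:ℝ) else 0) else 1) *
      (if i = v then (if Q x y then (1:ℝ) else 0) else 1))
    have e1 : ∀ ω : ι → X, (∏ i, ((if i = u then (if ω i = x then (1:ℝ) else 0) else 1) *
      (if i = v then (if Q x (ω i) then (1:ℝ) else 0) else 1)))
        = if (ω u = x ∧ Q x (ω v)) then 1 else 0 := by
      intro ω
      rw [Finset.prod_mul_distrib,
        Finset.prod_ite_eq' Finset.univ u (fun i => if ω i = x then (1:ℝ) else 0),
        Finset.prod_ite_eq' Finset.univ v (fun i => if Q x (ω i) then (1:ℝ) else 0)]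
      by_cases h1 : ω u = x <;> by_cases h2 : Q x (ω v) <;> simp [h1, h2]
    simp only [e1] at h
    rw [unifProb_eq_sum]
    simp only [Set.mem_ofPred_eq]
    have e2 : ∏ i : ι, ((∑ y : X, (if i = u then (if y = x then (1:ℝ) else 0) else 1) *
      (if i = v then (if Q x y then (1:ℝ) else 0) else 1)) / (Fintype.card X : ℝ))
      = ∏ i : ι, ((if i = u then (1 / (Fintype.card X : ℝ)) else 1) *
        (if i = v then unifProb {y | Q x y} else 1)) := by
      refine Finset.prod_congr rfl fun i _ => ?_
      by_cases h1 : i = u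
      · have h2 : i ≠ v := fun h => huv (h1.symm.trans h)
        simp [h1, huv]
      · by_cases h2 : i = v
        · subst h2
          simp [h1, unifProb_eq_sum]
        · simp [h1, h2]
    have h' := h.trans e2
    refine le_trans (le_of_eq (Eq.trans ?_ h')) ?_
    · congr 1
      refine Finset.sum_congr rfl fun _ _ => ?_
      congr
    rw [Finset.prod_mul_distrib, Finset.prod_ite_eq', Finset.prod_ite_eq']
    simp only [Finset.mem_univ, if_true]
    gcongr
    exact hq x
  have : {ω : ι → X | Q (ω u) (ω v)} = {ω : ι → X | ∃ x, ω u = x ∧ Q x (ω v)} := by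
    ext ω; simp
  rw [this]
  refine (unifProb_exists_le_card _ _ key).trans (le_of_eq ?_)
  have : (Fintype.card X : ℝ) ≠ 0 := by simp
  field_simp

lemma unifProb_eq_const {K : ℕ} (j : Fin K) : unifProb {y : Fin K | y = j} = 1 / (K:ℝ) := by
  rw [unifProb_eq_sum]
  simp

lemma unifProb_mem_finset {X : Type*} [Fintype X] (T : Finset X) :
    unifProb {y : X | y ∈ T} = (T.card : ℝ) / (Fintype.card X : ℝ) := by
  rw [unifProb_eq_sum]
  simp

noncomputable def pj (M K : ℕ) (j : Fin K) : ℝ := unifProb {x : Fin M → Fin K | ∃ i, x i = j}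

lemma pj_le {M K : ℕ} (j : Fin K) : pj M K j ≤ (M:ℝ) / K := by
  have : Nonempty (Fin K) := ⟨j⟩
  unfold pj
  refine (unifProb_exists_le_card _ (1 / (K:ℝ)) fun i => ?_).trans (le_of_eq ?_)
  · exact ((unifProb_single i (fun y => y = j)).trans (unifProb_eq_const j)).le
  · simp [div_eq_mul_inv]

lemma unifProb_forall {M K : ℕ} (S : Fin K → Prop) :
    unifProb {x : Fin M → Fin K | ∀ i, S (x i)} = (unifProb {y | S y}) ^ M := by
  have h := avg_prod (fun (_ : Fin M) (x : Fin K) => if S x then (1:ℝ) else 0)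
  rw [unifProb_eq_sum, unifProb_eq_sum]
  simp only [Set.mem_ofPred_eq]
  simp only [Finset.prod_const, Finset.card_univ, Fintype.card_fin] at h
  rw [Fintype.card_fin, ← h]
  congr 1
  refine Finset.sum_congr rfl fun x _ => ?_
  rw [Finset.prod_ite_zero]
  simp

lemma le_pj {M K : ℕ} (j : Fin K) (hMK : M ≤ K) : (M:ℝ) / K / 2 ≤ pj M K j := by
  have : Nonempty (Fin K) := ⟨j⟩
  have hK : (0:ℝ) < K := by
    have := j.pos
    exact_mod_cast this
  have h1 : pj M K j = 1 - (1 - 1 / (K:ℝ)) ^ M := by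
    unfold pj
    rw [unifProb_compl_eq]
    have e : {x : Fin M → Fin K | ¬ ∃ i, x i = j} = {x : Fin M → Fin K | ∀ i, ¬ (x i = j)} := by
      ext x; simp
    rw [e, unifProb_forall (fun y => ¬ y = j)]
    rw [← unifProb_eq_const j, unifProb_compl_eq (fun y => y = j)]
    ring
  rw [h1]
  have h2 : (1 - 1 / (K:ℝ)) ^ M ≤ Real.exp (-((M:ℝ) / K)) := by
    have : (1 - 1 / (K:ℝ)) ≤ Real.exp (-(1 / (K:ℝ))) := Real.one_sub_le_exp_neg _
    have h0 : 0 ≤ 1 - 1 / (K:ℝ) := by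
      rw [sub_nonneg, div_le_one hK]
      have := j.pos
      exact_mod_cast this
    calc (1 - 1 / (K:ℝ)) ^ M ≤ (Real.exp (-(1 / (K:ℝ)))) ^ M := by gcongr
      _ = _ := by rw [← Real.exp_nat_mul]; congr 1; ring
  have hx0 : 0 ≤ (M:ℝ)/K := by positivity
  have hx1 : (M:ℝ)/K ≤ 1 := by
    rw [div_le_one hK]; exact_mod_cast hMK
  set x := (M:ℝ)/K
  have h3 : Real.exp (-x) ≤ 1 - x / 2 := by
    rw [Real.exp_neg, inv_le_comm₀ (Real.exp_pos _) (by linarith)]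
    have := Real.add_one_le_exp x
    refine le_trans ?_ this
    rw [inv_le_iff_one_le_mul₀ (by linarith)]
    nlinarith
  linarith

lemma card_image_tail {M K : ℕ} (s : ℕ) (hs : s ≤ K) (hK : 0 < K) :
    unifProb {x : Fin M → Fin K | (Finset.univ.image x).card ≤ s}
      ≤ (K:ℝ) ^ s * ((s:ℝ) / K) ^ M := by
  have hsub : {x : Fin M → Fin K | (Finset.univ.image x).card ≤ s} ⊆
      {x | ∃ y : Fin s → Fin K, ∀ i, x i ∈ Finset.univ.image y} := by
    intro x hx
    obtain ⟨t, ht1, ht2⟩ := Finset.exists_superset_card_eq (s := Finset.univ.image x) (n := s) hx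
      (by simpa using hs)
    refine ⟨fun i => (t.equivFinOfCardEq ht2).symm i, fun i => ?_⟩
    have hi : x i ∈ t := ht1 (by simp)
    simp only [Finset.mem_image, Finset.mem_univ, true_and]
    exact ⟨t.equivFinOfCardEq ht2 ⟨x i, hi⟩, by simp⟩
  refine (unifProb_mono hsub).trans ?_
  refine (unifProb_exists_le_card _ (((s:ℝ) / K) ^ M) fun y => ?_).trans (le_of_eq ?_)
  · rw [unifProb_forall (fun z => z ∈ Finset.univ.image y), unifProb_mem_finset]
    have : (Finset.univ.image y).card ≤ s := by
      simpa using Finset.card_image_le (s := Finset.univ) (f := y)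
    rw [Fintype.card_fin]
    gcongr
  · simp

lemma inter_tail {M K : ℕ} (T : Finset (Fin K)) (hT : T.card ≤ M) (hK : 0 < K) (μ : ℕ) (l : ℝ)
    (hl : 1 ≤ l) :
    unifProb {x : Fin M → Fin K | μ ≤ (T ∩ Finset.univ.image x).card}
      ≤ Real.exp (l * (M:ℝ) ^ 2 / K) / l ^ μ := by
  have hK' : (0:ℝ) < K := by exact_mod_cast hK
  have : Nonempty (Fin K) := ⟨⟨0, hK⟩⟩
  have hsub : {x : Fin M → Fin K | μ ≤ (T ∩ Finset.univ.image x).card} ⊆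
      {x | l ^ μ ≤ ∏ i, if x i ∈ T then l else 1} := by
    intro x hx
    simp only [Set.mem_ofPred_eq] at hx ⊢
    rw [Finset.prod_ite]
    simp only [Finset.prod_const, one_pow, mul_one]
    refine pow_le_pow_right₀ hl (hx.trans ?_)
    refine le_trans (Finset.card_le_card ?_)
      (Finset.card_image_le (s := Finset.univ.filter fun i => x i ∈ T) (f := x))
    intro z hz
    simp only [Finset.mem_inter, Finset.mem_image, Finset.mem_univ, true_and,
      Finset.mem_filter] at hz ⊢
    obtain ⟨hz, i, rfl⟩ := hz
    exact ⟨i, hz, rfl⟩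
  refine (unifProb_mono hsub).trans ?_
  have hl0 : 0 < l := by linarith
  refine (unifProb_markov _ (fun x => Finset.prod_nonneg fun i _ => by
    split_ifs <;> linarith) _ (by positivity)).trans ?_
  gcongr
  rw [avg_prod (fun (_ : Fin M) (y : Fin K) => if y ∈ T then l else 1)]
  simp only [Finset.prod_const, Finset.card_univ, Fintype.card_fin]
  have h1 : (∑ y : Fin K, if y ∈ T then l else 1) = K + (l - 1) * T.card := by
    have : ∀ y : Fin K, (if y ∈ T then l else 1) = 1 + (l - 1) * (if y ∈ T then 1 else 0) := by
      intro y; split_ifs <;> ring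
    simp only [this, Finset.sum_add_distrib, ← Finset.mul_sum]
    simp
  rw [h1]
  have hT' : (T.card : ℝ) ≤ M := by exact_mod_cast hT
  have h2 : ((K:ℝ) + (l - 1) * T.card) / K ≤ Real.exp (l * M / K) := by
    have h3 : ((K:ℝ) + (l - 1) * T.card) / K ≤ l * M / K + 1 := by
      rw [add_div, div_self hK'.ne', add_comm]
      gcongr
      linarith
    exact h3.trans (Real.add_one_le_exp _)
  calc _ ≤ (Real.exp (l * M / K)) ^ M := by
        gcongr
    _ = _ := by rw [← Real.exp_nat_mul]; congr 1; ring

lemma F_moment {m M K : ℕ} (hK : 0 < K) (B : Finset (Node m)) (j : Fin K) (θ : ℝ) :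
    (∑ ω : Placement m M K, ∏ v ∈ B, (if cached ω v j then θ else 1)) /
      (Fintype.card (Placement m M K) : ℝ) = (1 + (θ - 1) * pj M K j) ^ B.card := by
  have : Nonempty (Fin K) := ⟨⟨0, hK⟩⟩
  have h := avg_prod (fun (v : Node m) (x : Fin M → Fin K) =>
    if v ∈ B then (if ∃ i, x i = j then θ else 1) else 1)
  have e1 : ∀ ω : Placement m M K,
    (∏ v, if v ∈ B then (if ∃ i, ω v i = j then θ else 1) else 1)
     = ∏ v ∈ B, (if cached ω v j then θ else 1) := by
    intro ω
    rw [Finset.prod_ite_mem, Finset.univ_inter]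
    refine Finset.prod_congr rfl fun v _ => ?_
    unfold cached
    congr
  simp only [e1] at h
  rw [h]
  have e2 : ∀ v : Node m, (∑ x : Fin M → Fin K,
      if v ∈ B then (if ∃ i, x i = j then θ else 1) else 1) / (Fintype.card (Fin M → Fin K) : ℝ)
      = if v ∈ B then (1 + (θ - 1) * pj M K j) else 1 := by
    intro v
    have hc : (Fintype.card (Fin M → Fin K) : ℝ) ≠ 0 := by
      exact_mod_cast Fintype.card_ne_zero
    by_cases hv : v ∈ B
    · simp only [hv, if_true]
      have : ∀ x : Fin M → Fin K, (if ∃ i, x i = j then θ else 1)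
        = 1 + (θ - 1) * (if ∃ i, x i = j then 1 else 0) := by
        intro x; split_ifs <;> ring
      simp only [this, Finset.sum_add_distrib, ← Finset.mul_sum]
      rw [add_div, mul_div_assoc, pj, unifProb_eq_sum]
      congr 1
      · simp only [Finset.sum_const, Finset.card_univ, nsmul_eq_mul, mul_one]
        exact div_self hc
      · congr 2
        refine Finset.sum_congr rfl fun x _ => ?_
        simp only [Set.mem_ofPred_eq]
        congr
    · simp only [hv, if_false]
      simp only [Finset.sum_const, Finset.card_univ, nsmul_eq_mul, mul_one]
      exact div_self hc
  simp only [e2]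
  rw [Finset.prod_ite_mem]
  simp

lemma prod_cached {m M K : ℕ} (ω : Placement m M K) (w : Node m) (j : Fin K) (r : ℕ) (θ : ℝ) :
    (∏ v ∈ Finset.univ.filter (fun v => torusDist w v ≤ r), (if cached ω v j then θ else 1))
      = θ ^ Fcount ω r w j := by
  rw [Finset.prod_ite]
  simp only [Finset.prod_const, one_pow, mul_one]
  congr 1
  unfold Fcount candSet
  congr 1
  ext v
  simp [and_comm]

noncomputable def ballF {m : ℕ} (w : Node m) (r : ℕ) : Finset (Node m) :=
  Finset.univ.filter (fun v => torusDist w v ≤ r)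

lemma F_upper {m M K : ℕ} (w : Node m) (j : Fin K) (r : ℕ) (X t : ℝ)
    (hX : ((ballF w r).card : ℝ) * ((M:ℝ) / K) ≤ X) :
    unifProb {ω : Placement m M K | t < (Fcount ω r w j : ℝ)} ≤ Real.exp (2 * X - t) := by
  have hsub : {ω : Placement m M K | t < (Fcount ω r w j : ℝ)} ⊆
      {ω | Real.exp t ≤ ∏ v ∈ ballF w r, (if cached ω v j then Real.exp 1 else 1)} := by
    intro ω hω
    simp only [Set.mem_ofPred_eq] at hω ⊢
    rw [ballF, prod_cached, ← Real.exp_nat_mul, mul_one]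
    exact Real.exp_le_exp.2 hω.le
  refine (unifProb_mono hsub).trans ?_
  refine (unifProb_markov _ (fun x => Finset.prod_nonneg fun i _ => by
    split_ifs <;> positivity) _ (by positivity)).trans ?_
  rw [F_moment j.pos, Real.exp_sub]
  gcongr
  have hp := pj_le (M := M) j
  have hp0 : 0 ≤ pj M K j := unifProb_nonneg _
  have he : Real.exp 1 - 1 ≤ 2 := by
    have := Real.exp_one_lt_d9
    linarith
  have he0 : 0 ≤ Real.exp 1 - 1 := by
    have := Real.add_one_le_exp 1
    linarith
  have h1 : 1 + (Real.exp 1 - 1) * pj M K j ≤ Real.exp (2 * ((M:ℝ) / K)) := by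
    have := Real.add_one_le_exp (2 * ((M:ℝ) / K))
    have h2 : (Real.exp 1 - 1) * pj M K j ≤ 2 * ((M:ℝ) / K) := by gcongr
    linarith
  calc _ ≤ (Real.exp (2 * ((M:ℝ) / K))) ^ (ballF w r).card := by gcongr
    _ = Real.exp (2 * (((ballF w r).card : ℝ) * ((M:ℝ) / K))) := by
      rw [← Real.exp_nat_mul]; congr 1; ring
    _ ≤ _ := by gcongr

lemma F_lower {m M K : ℕ} (w : Node m) (j : Fin K) (r : ℕ) (X t : ℝ) (hMK : M ≤ K)
    (hX : X ≤ ((ballF w r).card : ℝ) * ((M:ℝ) / K)) :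
    unifProb {ω : Placement m M K | (Fcount ω r w j : ℝ) < t} ≤ Real.exp (t - X / 4) := by
  have hsub : {ω : Placement m M K | (Fcount ω r w j : ℝ) < t} ⊆
      {ω | Real.exp (-t) ≤ ∏ v ∈ ballF w r, (if cached ω v j then Real.exp (-1) else 1)} := by
    intro ω hω
    simp only [Set.mem_ofPred_eq] at hω ⊢
    rw [ballF, prod_cached, ← Real.exp_nat_mul]
    exact Real.exp_le_exp.2 (by linarith)
  refine (unifProb_mono hsub).trans ?_
  refine (unifProb_markov _ (fun x => Finset.prod_nonneg fun i _ => by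
    split_ifs <;> positivity) _ (by positivity)).trans ?_
  rw [F_moment j.pos, show t - X / 4 = -(X/4) - (-t) by ring, Real.exp_sub (-(X/4))]
  gcongr
  have hp := le_pj j hMK
  have hp0 : 0 ≤ pj M K j := unifProb_nonneg _
  have he : Real.exp (-1) ≤ 1 / 2 := by
    rw [Real.exp_neg, inv_le_comm₀ (Real.exp_pos _) (by norm_num)]
    have := Real.add_one_le_exp 1
    norm_num at this ⊢
    linarith
  have he0 := Real.exp_pos (-1)
  have hp1 : pj M K j ≤ 1 := by
    refine (pj_le j).trans ?_
    rw [div_le_one (by exact_mod_cast j.pos)]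
    exact_mod_cast hMK
  have h1 : 1 + (Real.exp (-1) - 1) * pj M K j ≤ Real.exp (- ((M:ℝ) / K / 4)) := by
    have := Real.add_one_le_exp (- ((M:ℝ) / K / 4))
    nlinarith
  have h0 : 0 ≤ 1 + (Real.exp (-1) - 1) * pj M K j := by nlinarith
  calc _ ≤ (Real.exp (- ((M:ℝ) / K / 4))) ^ (ballF w r).card := by gcongr
    _ = Real.exp (-((((ballF w r).card : ℝ) * ((M:ℝ) / K)) / 4)) := by
      rw [← Real.exp_nat_mul]; congr 1; ring
    _ ≤ _ := by gcongr

lemma sub_mod_eq {m a b : ℕ} (ha : a < m) (hb : b < m) :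
    (a + m - b) % m = if b ≤ a then a - b else a + m - b := by
  split_ifs with h
  · rw [show a + m - b = (a - b) + m by omega, Nat.add_mod_right, Nat.mod_eq_of_lt (by omega)]
  · rw [Nat.mod_eq_of_lt (by omega)]

lemma cdist_comm {m : ℕ} (a b : Fin m) : cdist a b = cdist b a := by
  unfold cdist; rw [min_comm]

lemma torusDist_comm {m : ℕ} (a b : Node m) : torusDist a b = torusDist b a := by
  unfold torusDist; rw [cdist_comm, cdist_comm a.2]

lemma coord_upper {m : ℕ} (a : Fin m) (k : ℕ) :
    (Finset.univ.filter fun b : Fin m => cdist a b ≤ k).card ≤ 2 * (k + 1) := by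
  have h1 : (Finset.univ.filter fun b : Fin m => (a.val + m - b.val) % m ≤ k).card ≤ k + 1 := by
    rw [← Finset.card_range (k+1)]
    refine Finset.card_le_card_of_injOn (fun b => (a.val + m - b.val) % m) ?_ ?_
    · intro b hb
      simp at hb ⊢
      omega
    · intro b _ c _ h
      simp only at h
      rw [sub_mod_eq a.2 b.2, sub_mod_eq a.2 c.2] at h
      have := a.2; have := b.2; have := c.2
      apply Fin.ext
      split_ifs at h <;> omega
  have h2 : (Finset.univ.filter fun b : Fin m => (b.val + m - a.val) % m ≤ k).card ≤ k + 1 := by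
    rw [← Finset.card_range (k+1)]
    refine Finset.card_le_card_of_injOn (fun b => (b.val + m - a.val) % m) ?_ ?_
    · intro b hb
      simp at hb ⊢
      omega
    · intro b _ c _ h
      simp only at h
      rw [sub_mod_eq b.2 a.2, sub_mod_eq c.2 a.2] at h
      have := a.2; have := b.2; have := c.2
      apply Fin.ext
      split_ifs at h <;> omega
  have hsub : (Finset.univ.filter fun b : Fin m => cdist a b ≤ k) ⊆
      (Finset.univ.filter fun b : Fin m => (a.val + m - b.val) % m ≤ k) ∪
      (Finset.univ.filter fun b : Fin m => (b.val + m - a.val) % m ≤ k) := by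
    intro b hb
    simp only [Finset.mem_filter, Finset.mem_univ, true_and, Finset.mem_union, cdist,
      min_le_iff] at hb ⊢
    exact hb
  have := (Finset.card_le_card hsub).trans (Finset.card_union_le _ _)
  omega

lemma coord_lower {m : ℕ} (a : Fin m) (k : ℕ) (hk : k < m) :
    k + 1 ≤ (Finset.univ.filter fun b : Fin m => cdist a b ≤ k).card := by
  have hm : 0 < m := by omega
  conv_lhs => rw [← Finset.card_range (k+1)]
  refine Finset.card_le_card_of_injOn (fun i => (⟨(a.val + i) % m, Nat.mod_lt _ hm⟩ : Fin m)) ?_ ?_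
  · intro i hi
    simp only [Finset.coe_range, Set.mem_Iio] at hi
    simp only [Finset.coe_filter, Finset.mem_univ, true_and, Set.mem_ofPred_eq, cdist, min_le_iff]
    right
    rw [sub_mod_eq (Nat.mod_lt _ hm) a.2]
    have ha := a.2
    by_cases h : a.val + i < m
    · rw [Nat.mod_eq_of_lt h]
      split_ifs <;> omega
    · have : (a.val + i) % m = a.val + i - m := by
        rw [Nat.mod_eq_sub_mod (by omega), Nat.mod_eq_of_lt (by omega)]
      rw [this]
      split_ifs <;> omega
  · intro i hi j hj h
    simp only [Finset.coe_range, Set.mem_Iio] at hi hj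
    simp only [Fin.mk.injEq] at h
    have h' : i ≡ j [MOD m] := Nat.ModEq.add_left_cancel' a.val h
    exact Nat.ModEq.eq_of_lt_of_lt h' (by omega) (by omega)

lemma ball_upper {m : ℕ} (w : Node m) (r : ℕ) : (ballF w r).card ≤ (2 * (r + 1)) ^ 2 := by
  have hsub : ballF w r ⊆ (Finset.univ.filter fun b : Fin m => cdist w.1 b ≤ r) ×ˢ
      (Finset.univ.filter fun b : Fin m => cdist w.2 b ≤ r) := by
    intro v hv
    have hv' : cdist w.1 v.1 + cdist w.2 v.2 ≤ r := (Finset.mem_filter.1 hv).2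
    simp only [Finset.mem_filter, Finset.mem_univ, true_and, Finset.mem_product]
    omega
  refine (Finset.card_le_card hsub).trans ?_
  rw [Finset.card_product, sq]
  exact Nat.mul_le_mul (coord_upper _ _) (coord_upper _ _)

lemma ball_lower {m : ℕ} (w : Node m) (r : ℕ) (hr : r < m) :
    (r / 2 + 1) ^ 2 ≤ (ballF w r).card := by
  have hsub : (Finset.univ.filter fun b : Fin m => cdist w.1 b ≤ r / 2) ×ˢ
      (Finset.univ.filter fun b : Fin m => cdist w.2 b ≤ r / 2) ⊆ ballF w r := by
    intro v hv
    simp only [Finset.mem_filter, Finset.mem_univ, true_and, Finset.mem_product] at hv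
    refine Finset.mem_filter.2 ⟨Finset.mem_univ _, ?_⟩
    show cdist w.1 v.1 + cdist w.2 v.2 ≤ r
    omega
  refine le_trans ?_ (Finset.card_le_card hsub)
  rw [Finset.card_product, sq]
  exact Nat.mul_le_mul (coord_lower _ _ (by omega)) (coord_lower _ _ (by omega))

lemma mem_image_iff_cached {m M K : ℕ} (ω : Placement m M K) (u : Node m) (j : Fin K) :
    j ∈ Finset.univ.image (ω u) ↔ cached ω u j := by
  simp [cached]

lemma deg_bound {m M K : ℕ} (ω : Placement m M K) (r : ℕ) (u : Node m) (Y : ℝ) (hY : 0 ≤ Y)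
    (h : ∀ j, (Fcount ω (2 * r) u j : ℝ) ≤ Y) : (degH ω r u : ℝ) ≤ M * Y := by
  have hsub : (Finset.univ.filter fun v => adjH ω r u v) ⊆
      (Finset.univ.image (ω u)).biUnion fun j => candSet ω u j (2 * r) := by
    intro v hv
    simp only [Finset.mem_filter, Finset.mem_univ, true_and] at hv
    obtain ⟨_, ⟨j, h1, h2⟩, h3⟩ := hv
    rw [Finset.mem_biUnion]
    refine ⟨j, (mem_image_iff_cached ω u j).2 h1, ?_⟩
    simp [candSet, h2, h3]
  have h1 := (Finset.card_le_card hsub).trans Finset.card_biUnion_le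
  have h2 : (degH ω r u : ℝ) ≤ ∑ j ∈ Finset.univ.image (ω u), (Fcount ω (2*r) u j : ℝ) := by
    unfold degH Fcount
    exact_mod_cast h1
  have h3 : ((Finset.univ.image (ω u)).card : ℝ) ≤ M := by
    have := Finset.card_image_le (s := Finset.univ) (f := ω u)
    simp only [Finset.card_univ, Fintype.card_fin] at this
    exact_mod_cast this
  calc (degH ω r u : ℝ) ≤ _ := h2
    _ ≤ ∑ j ∈ Finset.univ.image (ω u), Y := Finset.sum_le_sum fun j _ => h j
    _ = (Finset.univ.image (ω u)).card * Y := by simp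
    _ ≤ _ := by gcongr

lemma eH_bound {m M K : ℕ} (ω : Placement m M K) (r : ℕ) (Y : ℝ) (hY : 0 ≤ Y)
    (h : ∀ u j, (Fcount ω (2 * r) u j : ℝ) ≤ Y) :
    eH ω r ≤ ((m ^ 2 : ℕ) : ℝ) * (M * Y) := by
  have h1 : ∑ u : Node m, (degH ω r u : ℝ) ≤ ((m ^ 2 : ℕ) : ℝ) * (M * Y) := by
    refine (Finset.sum_le_sum fun u _ => deg_bound ω r u Y hY (h u)).trans (le_of_eq ?_)
    simp [sq]
  have h0 : 0 ≤ ((m ^ 2 : ℕ) : ℝ) * (M * Y) := by positivity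
  unfold eH
  linarith

lemma eH_pos {m M K : ℕ} (ω : Placement m M K) (r : ℕ) (u v : Node m) (h : adjH ω r u v) :
    0 < eH ω r := by
  unfold eH
  have h1 : 0 < (degH ω r u : ℝ) := by
    unfold degH
    have : 0 < (Finset.univ.filter fun v => adjH ω r u v).card :=
      Finset.card_pos.2 ⟨v, by simpa using h⟩
    exact_mod_cast this
  have := Finset.single_le_sum (f := fun u => (degH ω r u : ℝ)) (fun _ _ => Nat.cast_nonneg _)
    (Finset.mem_univ u)
  linarith

lemma select_bound {m M K : ℕ} (ω : Placement m M K) (r : ℕ) (u v : Node m) (Z : ℝ) (hZ : 0 < Z)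
    (h : ∀ w j, Z ≤ (Fcount ω r w j : ℝ)) (μ : ℕ) (hμ : tTwo ω u v < μ) :
    selectProb ω r u v ≤
      (((ballF u r).card : ℝ) * μ * (2 / Z ^ 2)) / (((m ^ 2 : ℕ) : ℝ) * (K : ℝ)) := by
  unfold selectProb
  refine div_le_div_of_nonneg_right ?_ (by positivity)
  set T := Finset.univ.image (ω u) ∩ Finset.univ.image (ω v) with hT
  have h1 : ∀ w : Node m, ∀ j : Fin K,
      (if u ∈ candSet ω w j r ∧ v ∈ candSet ω w j r then
        2 / ((candSet ω w j r).card : ℝ) ^ 2 else 0) ≤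
      (if w ∈ ballF u r then (if j ∈ T then 2 / Z ^ 2 else 0) else 0) := by
    intro w j
    by_cases hc : u ∈ candSet ω w j r ∧ v ∈ candSet ω w j r
    · rw [if_pos hc]
      obtain ⟨hu, hv⟩ := hc
      simp only [candSet, Finset.mem_filter, Finset.mem_univ, true_and] at hu hv
      have hw : w ∈ ballF u r := by
        simp only [ballF, Finset.mem_filter, Finset.mem_univ, true_and]
        rw [torusDist_comm]; exact hu.2
      have hj : j ∈ T := by
        rw [hT, Finset.mem_inter, mem_image_iff_cached, mem_image_iff_cached]
        exact ⟨hu.1, hv.1⟩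
      rw [if_pos hw, if_pos hj]
      have := h w j
      unfold Fcount at this
      gcongr
    · rw [if_neg hc]
      split_ifs <;> positivity
  refine (Finset.sum_le_sum fun w _ => Finset.sum_le_sum fun j _ => h1 w j).trans ?_
  have h2 : ∀ w : Node m, (∑ j : Fin K,
      (if w ∈ ballF u r then (if j ∈ T then 2 / Z ^ 2 else 0) else 0))
      = if w ∈ ballF u r then (T.card : ℝ) * (2 / Z ^ 2) else 0 := by
    intro w
    split_ifs
    · simp
    · simp
  simp only [h2]
  rw [Finset.sum_ite_mem, Finset.univ_inter, Finset.sum_const, nsmul_eq_mul, ← mul_assoc]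
  have h3 : (T.card : ℝ) ≤ μ := by
    have : T.card ≤ μ := hμ.le
    exact_mod_cast this
  gcongr

lemma det_bound {m M : ℕ} (ω : Placement m M (m^2)) (r : ℕ) (hm : 0 < m) (hM : 0 < M) (hr : 0 < r)
    (μ : ℕ) (X : ℝ) (hXe : X = (r:ℝ) ^ 2 * (M:ℝ) / ((m ^ 2 : ℕ) : ℝ))
    (hμ : ∀ u v, u ≠ v → tTwo ω u v < μ)
    (hl : ∀ w j, 1 / 32 * X ≤ (Fcount ω r w j : ℝ))
    (hu : ∀ w j, (Fcount ω (2 * r) w j : ℝ) ≤ 73 * X) (u v : Node m) (h : adjH ω r u v) :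
    selectProb ω r u v ≤ (16 * 2 * 1024 * 73 * (μ + 1)) / eH ω r := by
  have hn : (0:ℝ) < ((m ^ 2 : ℕ) : ℝ) := by positivity
  have hM' : (0:ℝ) < M := by exact_mod_cast hM
  have hr' : (1:ℝ) ≤ r := by exact_mod_cast hr
  have hX : 0 < X := by rw [hXe]; positivity
  rw [le_div_iff₀ (eH_pos ω r u v h)]
  have hs := select_bound ω r u v (1 / 32 * X) (by positivity) hl μ (hμ u v h.1)
  have he := eH_bound ω r (73 * X) (by positivity) hu
  have hb : ((ballF u r).card : ℝ) ≤ 16 * (r:ℝ) ^ 2 := by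
    have h1 : ((ballF u r).card : ℝ) ≤ (2 * ((r:ℝ) + 1)) ^ 2 := by exact_mod_cast ball_upper u r
    nlinarith
  set n : ℝ := ((m ^ 2 : ℕ) : ℝ)
  have hs2 : selectProb ω r u v ≤
      ((16 * (r:ℝ) ^ 2) * (μ + 1) * (2 / (1 / 32 * X) ^ 2)) / (n * n) := by
    refine hs.trans ?_
    gcongr
    linarith
  calc selectProb ω r u v * eH ω r ≤
      ((16 * (r:ℝ) ^ 2) * (μ + 1) * (2 / (1 / 32 * X) ^ 2)) / (n * n) * (n * (M * (73 * X))) :=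
        mul_le_mul hs2 he (eH_pos ω r u v h).le (by positivity)
    _ = 16 * 2 * 1024 * 73 * (μ + 1) * ((r:ℝ)^2 * M / n) / X := by
      field_simp
      norm_num
    _ = 16 * 2 * 1024 * 73 * (μ + 1) := by
      rw [← hXe]; field_simp
    _ ≤ _ := le_rfl

lemma Fcount_mono {m M K : ℕ} (ω : Placement m M K) (r : ℕ) (w : Node m) (j : Fin K) :
    Fcount ω r w j ≤ Fcount ω (2 * r) w j := by
  unfold Fcount candSet
  refine Finset.card_le_card ?_
  intro v hv
  have := (Finset.mem_filter.1 hv).2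
  refine Finset.mem_filter.2 ⟨Finset.mem_univ _, this.1, by omega⟩

lemma main_finite {m M r : ℕ} (hm : 0 < m) (hM : 0 < M) (hMK : M ≤ m ^ 2) (hr : 0 < r)
    (hrm : r < m) (δ : ℝ) (hδ : δ ≤ 1 / 3) (μ : ℕ) (l : ℝ) (hl : 1 ≤ l) (X n qA qB qC : ℝ)
    (hn : n = ((m ^ 2 : ℕ) : ℝ))
    (hX : X = (r:ℝ) ^ 2 * (M:ℝ) / ((m ^ 2 : ℕ) : ℝ))
    (hA : n ^ (M / 3) * (((M / 3 : ℕ) : ℝ) / n) ^ M ≤ qA)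
    (hB : Real.exp (l * (M:ℝ) ^ 2 / n) / l ^ μ ≤ qB)
    (hC : Real.exp (-(X / 32)) ≤ qC) :
    1 - (n * qA + n * n * qB + n * n * qC + n * n * qC) ≤
      unifProb {ω : Placement m M (m ^ 2) |
            goodPlacement δ μ ω ∧
            (∀ (w : Node m) (j : Fin (m ^ 2)),
              1 / 32 * X ≤ (Fcount ω r w j : ℝ) ∧ (Fcount ω r w j : ℝ) ≤ 73 * X) ∧
            ∀ u v : Node m, adjH ω r u v →
              selectProb ω r u v ≤ (16 * 2 * 1024 * 73 * (μ + 1)) / eH ω r} := by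
  have hK : 0 < m ^ 2 := by positivity
  have hn0 : 0 < n := by rw [hn]; exact_mod_cast hK
  have hM' : (0:ℝ) < M := by exact_mod_cast hM
  have hr' : (1:ℝ) ≤ r := by exact_mod_cast hr
  have hX0 : 0 < X := by rw [hX, ← hn]; positivity
  have : Nonempty (Fin (m ^ 2)) := ⟨⟨0, hK⟩⟩
  have hcN : (Fintype.card (Node m) : ℝ) = n := by rw [hn]; simp [sq]
  have hcK : (Fintype.card (Fin (m ^ 2)) : ℝ) = n := by rw [hn]; simp
  have PA : unifProb {ω : Placement m M (m ^ 2) |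
      ∃ u : Node m, (Finset.univ.image (ω u)).card ≤ M / 3} ≤ n * qA := by
    rw [← hcN]
    refine unifProb_exists_le_card _ _ fun u => ?_
    refine (le_of_eq (unifProb_single u
      (fun x : Fin M → Fin (m ^ 2) => (Finset.univ.image x).card ≤ M / 3))).trans ?_
    refine (card_image_tail (M / 3) (by omega) hK).trans ?_
    rw [← hn]; exact hA
  have hqB0 : 0 ≤ qB := le_trans (by positivity) hB
  have PB : unifProb {ω : Placement m M (m ^ 2) |
      ∃ p : Node m × Node m, p.1 ≠ p.2 ∧ μ ≤ tTwo ω p.1 p.2} ≤ n * n * qB := by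
    have : (Fintype.card (Node m × Node m) : ℝ) = n * n := by
      rw [Fintype.card_prod, Nat.cast_mul, hcN]
    rw [← this]
    refine unifProb_exists_le_card _ _ fun p => ?_
    by_cases hp : p.1 = p.2
    · have : {ω : Placement m M (m ^ 2) | p.1 ≠ p.2 ∧ μ ≤ tTwo ω p.1 p.2} = ∅ := by
        ext ω; simp [hp]
      rw [this]
      unfold unifProb
      simpa using hqB0
    · refine le_trans (unifProb_mono (fun ω hω => hω.2)) ?_
      refine unifProb_pair p.1 p.2 hp (fun x y : Fin M → Fin (m ^ 2) =>
        μ ≤ (Finset.univ.image x ∩ Finset.univ.image y).card) qB fun x => ?_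
      refine (inter_tail (Finset.univ.image x) ?_ hK μ l hl).trans ?_
      · simpa using Finset.card_image_le (s := Finset.univ) (f := x)
      · rw [← hn]; exact hB
  have hcp : (Fintype.card (Node m × Fin (m ^ 2)) : ℝ) = n * n := by
    rw [Fintype.card_prod, Nat.cast_mul, hcN, hcK]
  have PU : unifProb {ω : Placement m M (m ^ 2) |
      ∃ p : Node m × Fin (m ^ 2), 73 * X < (Fcount ω (2 * r) p.1 p.2 : ℝ)} ≤ n * n * qC := by
    rw [← hcp]
    refine unifProb_exists_le_card _ _ fun p => ?_
    refine (F_upper p.1 p.2 (2 * r) (36 * X) (73 * X) ?_).trans (le_trans ?_ hC)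
    · have h1 : ((ballF p.1 (2 * r)).card : ℝ) ≤ (2 * (2 * (r:ℝ) + 1)) ^ 2 := by
        exact_mod_cast ball_upper p.1 (2 * r)
      have h2 : ((ballF p.1 (2 * r)).card : ℝ) ≤ 36 * (r:ℝ) ^ 2 := by nlinarith
      rw [hX]
      calc _ ≤ 36 * (r:ℝ) ^ 2 * ((M:ℝ) / ((m ^ 2 : ℕ) : ℝ)) := by gcongr
        _ = _ := by ring
    · rw [Real.exp_le_exp]; linarith
  have PL : unifProb {ω : Placement m M (m ^ 2) |
      ∃ p : Node m × Fin (m ^ 2), (Fcount ω r p.1 p.2 : ℝ) < 1 / 32 * X} ≤ n * n * qC := by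
    rw [← hcp]
    refine unifProb_exists_le_card _ _ fun p => ?_
    refine (F_lower p.1 p.2 r (X / 4) (1 / 32 * X) hMK ?_).trans (le_trans ?_ hC)
    · have h1 : (((r / 2 : ℕ) : ℝ) + 1) ^ 2 ≤ ((ballF p.1 r).card : ℝ) := by
        exact_mod_cast ball_lower p.1 r hrm
      have h3 : (r:ℝ) ≤ 2 * (((r / 2 : ℕ) : ℝ) + 1) := by
        have : r ≤ 2 * (r / 2 + 1) := by omega
        exact_mod_cast this
      have h2 : (r:ℝ) ^ 2 / 4 ≤ ((ballF p.1 r).card : ℝ) := by nlinarith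
      rw [hX]
      calc _ = (r:ℝ) ^ 2 / 4 * ((M:ℝ) / ((m ^ 2 : ℕ) : ℝ)) := by ring
        _ ≤ _ := by gcongr
    · rw [Real.exp_le_exp]; linarith
  rw [unifProb_compl_eq]
  refine sub_le_sub_left ?_ _
  refine le_trans (unifProb_mono ?_) ((unifProb_union_le _ _).trans (add_le_add
    ((unifProb_union_le _ _).trans (add_le_add
      ((unifProb_union_le _ _).trans (add_le_add PA PB)) PU)) PL))
  intro ω hω
  by_contra hcon
  apply hω
  simp only [Set.mem_union, Set.mem_ofPred_eq, not_or, not_exists, not_and, not_le, not_lt] at hcon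
  obtain ⟨⟨⟨h1, h2⟩, h3⟩, h4⟩ := hcon
  have h2' : ∀ u v, u ≠ v → tTwo ω u v < μ := fun u v huv => h2 (u, v) huv
  have h3' : ∀ w j, (Fcount ω (2 * r) w j : ℝ) ≤ 73 * X := fun w j => h3 (w, j)
  have h4' : ∀ w j, 1 / 32 * X ≤ (Fcount ω r w j : ℝ) := fun w j => h4 (w, j)
  refine ⟨⟨fun u => ?_, h2'⟩, fun w j => ⟨h4' w j, le_trans ?_ (h3' w j)⟩,
    det_bound ω r hm hM hr μ X hX h2' h4' h3'⟩
  · have h5 : M ≤ 3 * tOne ω u := by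
      have := h1 u
      unfold tOne
      omega
    have h6 : (M:ℝ) ≤ 3 * (tOne ω u : ℝ) := by exact_mod_cast h5
    nlinarith
  · exact_mod_cast Fcount_mono ω r w j

lemma ceil_le_two {x a : ℝ} (hx : 1 ≤ x) (ha : 0 ≤ a) : ((⌈x ^ a⌉₊ : ℕ) : ℝ) ≤ 2 * x ^ a := by
  have h1 : 1 ≤ x ^ a := Real.one_le_rpow hx ha
  have h2 := Nat.ceil_lt_add_one (a := x ^ a) (by linarith)
  linarith

lemma ev_rpow (a : ℝ) (ha : 0 < a) (c : ℝ) : ∀ᶠ x : ℝ in atTop, c < x ^ a :=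
  (tendsto_rpow_atTop ha).eventually_gt_atTop c

lemma qA_bound {x : ℝ} {M : ℕ} (hx : 4 ≤ x) (hM : 18 ≤ M) (hMx : (M:ℝ) ≤ 2 * x ^ (1/2 : ℝ)) :
    x ^ (M / 3) * (((M / 3 : ℕ) : ℝ) / x) ^ M ≤ (x ^ 2)⁻¹ / 4 := by
  have hx0 : 0 < x := by linarith
  have hx1 : 1 ≤ x := by linarith
  have hs : ((M / 3 : ℕ) : ℝ) ≤ (M:ℝ) / 3 := Nat.cast_div_le
  have hy : 0 < x ^ (1/2:ℝ) := by positivity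
  have h1 : ((M / 3 : ℕ) : ℝ) / x ≤ x ^ (-(1/2):ℝ) := by
    rw [div_le_iff₀ hx0]
    have : x ^ (-(1/2):ℝ) * x = x ^ (1/2:ℝ) := by
      conv_lhs => rw [← Real.rpow_one x]
      rw [← Real.rpow_mul hx0.le, ← Real.rpow_add hx0]; norm_num
    rw [this]
    linarith
  have h2 : x ^ (M / 3) ≤ x ^ ((M:ℝ) / 3) := by
    rw [← Real.rpow_natCast]
    exact Real.rpow_le_rpow_of_exponent_le hx1 hs
  calc x ^ (M / 3) * (((M / 3 : ℕ) : ℝ) / x) ^ M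
      ≤ x ^ ((M:ℝ) / 3) * (x ^ (-(1/2):ℝ)) ^ M := by gcongr
    _ = x ^ (-(M:ℝ) / 6) := by
      rw [← Real.rpow_natCast, ← Real.rpow_mul hx0.le, ← Real.rpow_add hx0]
      congr 1; ring
    _ ≤ x ^ (-(3:ℕ):ℝ) := by
      apply Real.rpow_le_rpow_of_exponent_le hx1
      have : (18:ℝ) ≤ M := by exact_mod_cast hM
      push_cast
      linarith
    _ = (x ^ 3)⁻¹ := by rw [Real.rpow_neg hx0.le, Real.rpow_natCast]
    _ = (x ^ 2)⁻¹ / x := by field_simp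
    _ ≤ (x ^ 2)⁻¹ / 4 := by gcongr

lemma qB_bound {x a : ℝ} {M μ : ℕ} (hx : 12 ≤ x) (ha1 : a < 1 / 2) (hM : 0 < M)
    (hMx : (M:ℝ) ≤ 2 * x ^ a) (h4 : 4 < x ^ ((1 - 2 * a) / 2))
    (hμ : 8 / (1 - 2 * a) ≤ μ) :
    1 ≤ x / (M:ℝ) ^ 2 ∧
    Real.exp (x / (M:ℝ) ^ 2 * (M:ℝ) ^ 2 / x) / (x / (M:ℝ) ^ 2) ^ μ ≤ (x ^ 3)⁻¹ / 4 := by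
  have hx0 : 0 < x := by linarith
  have hx1 : 1 ≤ x := by linarith
  have hM' : (0:ℝ) < M := by exact_mod_cast hM
  have ha : 0 < 1 - 2 * a := by linarith
  have h1 : x ^ ((1 - 2 * a) / 2) ≤ x / (M:ℝ) ^ 2 := by
    rw [le_div_iff₀ (by positivity)]
    have hM2 : (M:ℝ) ^ 2 ≤ 4 * x ^ (2 * a) := by
      calc (M:ℝ) ^ 2 ≤ (2 * x ^ a) ^ 2 := by gcongr
        _ = 4 * x ^ (2 * a) := by
          rw [mul_pow, ← Real.rpow_natCast, ← Real.rpow_natCast (x ^ a), ← Real.rpow_mul hx0.le]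
          norm_num [mul_comm]
    have e : x ^ ((1 - 2 * a) / 2) * (x ^ ((1 - 2 * a) / 2) * x ^ (2 * a)) = x := by
      rw [← Real.rpow_add hx0, ← Real.rpow_add hx0]
      conv_rhs => rw [← Real.rpow_one x]
      congr 1; ring
    calc x ^ ((1 - 2 * a) / 2) * (M:ℝ) ^ 2 ≤ x ^ ((1 - 2 * a) / 2) * (4 * x ^ (2 * a)) := by gcongr
      _ ≤ x ^ ((1 - 2 * a) / 2) * (x ^ ((1 - 2 * a) / 2) * x ^ (2 * a)) := by gcongr
      _ = x := e
  refine ⟨by linarith, ?_⟩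
  have e1 : x / (M:ℝ) ^ 2 * (M:ℝ) ^ 2 / x = 1 := by field_simp
  rw [e1]
  have h2 : x ^ 4 ≤ (x / (M:ℝ) ^ 2) ^ μ := by
    calc x ^ 4 = x ^ ((4:ℕ):ℝ) := by rw [Real.rpow_natCast]
      _ ≤ x ^ ((1 - 2 * a) / 2 * μ) := by
        apply Real.rpow_le_rpow_of_exponent_le hx1
        rw [div_le_iff₀ ha] at hμ
        push_cast
        linarith
      _ = (x ^ ((1 - 2 * a) / 2)) ^ μ := by rw [Real.rpow_mul hx0.le, Real.rpow_natCast]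
      _ ≤ _ := by gcongr
  have he : Real.exp 1 ≤ 3 := by
    have := Real.exp_one_lt_d9
    linarith
  calc Real.exp 1 / (x / (M:ℝ) ^ 2) ^ μ ≤ 3 / x ^ 4 := by gcongr
    _ = (x ^ 3)⁻¹ * (3 / x) := by field_simp
    _ ≤ (x ^ 3)⁻¹ * (3 / 12) := by gcongr
    _ = _ := by ring

lemma qC_bound {x e X : ℝ} (hx : 4 ≤ x) (hX : x ^ e ≤ X) (h : Real.log x ≤ 1 / 128 * x ^ e) :
    Real.exp (-(X / 32)) ≤ (x ^ 3)⁻¹ / 4 := by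
  have hx0 : 0 < x := by linarith
  calc Real.exp (-(X / 32)) ≤ Real.exp (-(4 * Real.log x)) := by
        rw [Real.exp_le_exp]; linarith
    _ = (x ^ 4)⁻¹ := by
      rw [Real.exp_neg, show (4:ℝ) * Real.log x = ((4:ℕ):ℝ) * Real.log x by norm_num,
        Real.exp_nat_mul, Real.exp_log hx0]
    _ = (x ^ 3)⁻¹ / x := by field_simp
    _ ≤ _ := by gcongr

lemma eps_pos (α β : ℝ) (hcond : ∃ N₀ : ℕ, ∀ n : ℕ, N₀ ≤ n →
      1 + 2 * Real.log (Real.log (n : ℝ)) / Real.log (n : ℝ) ≤ α + 2 * β) :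
    0 < α + 2 * β - 1 := by
  obtain ⟨N, h⟩ := hcond
  have h1 := h (max N 3) (le_max_left _ _)
  have h3 : (3:ℝ) ≤ ((max N 3 : ℕ) : ℝ) := by exact_mod_cast le_max_right _ _
  have h4 : 1 < Real.log ((max N 3 : ℕ) : ℝ) := by
    rw [Real.lt_log_iff_exp_lt (by linarith)]
    have := Real.exp_one_lt_d9
    linarith
  have h5 := Real.log_pos h4
  have : 0 < 2 * Real.log (Real.log ((max N 3 : ℕ) : ℝ)) / Real.log ((max N 3 : ℕ) : ℝ) := by
    positivity
  linarith


/-- Let `K = n`, `M = ⌈n^α⌉`, `r = ⌈n^β⌉` with constants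
`0 < α, β < 1/2` satisfying `α + 2β ≥ 1 + 2·log log n/log n`, under the Uniform
popularity distribution.  With high probability over the cache placement — in
particular on the event that the placement is `((1-α)/3, μ)`-good for a constant `μ`
and that every node `w` and file `j` have `F_j(w) = Θ(r²M/n)` cached replicas of `W_j`
in `B_r(w)` — for every edge `(u,v)` of the configuration graph `H`, the conditional
probability (given the placement) that a single request of Strategy II selects the
pair `{u,v}` as its two candidate servers is `O(1/e(H))`. -/
theorem statement9 (α β : ℝ) (hα0 : 0 < α) (hα1 : α < 1 / 2) (hβ0 : 0 < β)
    (hβ1 : β < 1 / 2)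
    (hcond : ∃ N₀ : ℕ, ∀ n : ℕ, N₀ ≤ n →
      1 + 2 * Real.log (Real.log (n : ℝ)) / Real.log (n : ℝ) ≤ α + 2 * β) :
    ∃ (μ : ℕ) (C c c₁ c₂ : ℝ), 0 < C ∧ 0 < c ∧ 0 < c₁ ∧ 0 < c₂ ∧
      ∃ N : ℕ, ∀ m : ℕ, N ≤ m →
        1 - (((m ^ 2 : ℕ) : ℝ)) ^ (-c) ≤
          unifProb {ω : Placement m (Mf α (m ^ 2)) (m ^ 2) |
            goodPlacement ((1 - α) / 3) μ ω ∧
            (∀ (w : Node m) (j : Fin (m ^ 2)),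
              c₁ * ((rf β (m ^ 2) : ℝ) ^ 2 * (Mf α (m ^ 2) : ℝ) / ((m ^ 2 : ℕ) : ℝ)) ≤
                  (Fcount ω (rf β (m ^ 2)) w j : ℝ) ∧
              (Fcount ω (rf β (m ^ 2)) w j : ℝ) ≤
                  c₂ * ((rf β (m ^ 2) : ℝ) ^ 2 * (Mf α (m ^ 2) : ℝ) /
                    ((m ^ 2 : ℕ) : ℝ))) ∧
            ∀ u v : Node m, adjH ω (rf β (m ^ 2)) u v →
              selectProb ω (rf β (m ^ 2)) u v ≤ C / eH ω (rf β (m ^ 2))} := by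

  have hε := eps_pos α β hcond
  set ε := α + 2 * β - 1 with hεd
  set μ : ℕ := ⌈8 / (1 - 2 * α)⌉₊ with hμd
  refine ⟨μ, 16 * 2 * 1024 * 73 * (μ + 1), 1, 1 / 32, 73, by positivity, one_pos, by norm_num,
    by norm_num, ?_⟩
  have hev : ∀ᶠ x : ℝ in atTop, 12 ≤ x ∧ 18 < x ^ α ∧ 2 < x ^ (1 / 2 - β) ∧
      4 < x ^ ((1 - 2 * α) / 2) ∧ Real.log x ≤ 1 / 128 * x ^ ε := by
    have hlog : ∀ᶠ x : ℝ in atTop, Real.log x ≤ 1 / 128 * x ^ ε := by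
      have := (isLittleO_log_rpow_atTop hε).bound (show (0:ℝ) < 1 / 128 by norm_num)
      filter_upwards [this, eventually_ge_atTop 1] with x h hx
      rw [Real.norm_of_nonneg (Real.log_nonneg hx), Real.norm_of_nonneg (by positivity)] at h
      exact h
    filter_upwards [eventually_ge_atTop 12, ev_rpow α hα0 18, ev_rpow (1 / 2 - β) (by linarith) 2,
      ev_rpow ((1 - 2 * α) / 2) (by linarith) 4, hlog] with x h1 h2 h3 h4 h5
    exact ⟨h1, h2, h3, h4, h5⟩
  have htend : Tendsto (fun m : ℕ => ((m ^ 2 : ℕ) : ℝ)) atTop atTop :=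
    tendsto_natCast_atTop_atTop.comp (tendsto_pow_atTop (by norm_num))
  obtain ⟨N, hN⟩ := eventually_atTop.1 (htend.eventually hev)
  refine ⟨N, fun m hm => ?_⟩
  obtain ⟨h1, h2, h3, h4, h5⟩ := hN m hm
  have hxm : (((m ^ 2 : ℕ) : ℝ)) ^ (1 / 2 : ℝ) = m := by
    push_cast
    rw [← Real.sqrt_eq_rpow, Real.sqrt_sq (by positivity)]
  have hm0 : 0 < m := by
    rcases Nat.eq_zero_or_pos m with h | h
    · subst h; norm_num at h1
    · exact h
  have hMlow : (((m ^ 2 : ℕ) : ℝ)) ^ α ≤ (Mf α (m ^ 2) : ℝ) := Nat.le_ceil _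
  have hrlow : (((m ^ 2 : ℕ) : ℝ)) ^ β ≤ (rf β (m ^ 2) : ℝ) := Nat.le_ceil _
  have hMup : (Mf α (m ^ 2) : ℝ) ≤ 2 * (((m ^ 2 : ℕ) : ℝ)) ^ α :=
    ceil_le_two (by linarith) hα0.le
  have hrup : (rf β (m ^ 2) : ℝ) ≤ 2 * (((m ^ 2 : ℕ) : ℝ)) ^ β :=
    ceil_le_two (by linarith) hβ0.le
  generalize Mf α (m ^ 2) = M at *
  generalize rf β (m ^ 2) = r at *
  obtain ⟨x, hx⟩ : ∃ x : ℝ, x = ((m ^ 2 : ℕ) : ℝ) := ⟨_, rfl⟩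
  rw [← hx] at h1 h2 h3 h4 h5 hxm hMlow hMup hrlow hrup
  have hx0 : 0 < x := by linarith
  have hM18 : 18 ≤ M := by
    have : (18:ℝ) ≤ M := by linarith
    exact_mod_cast this
  have hM12 : (M:ℝ) ≤ 2 * x ^ (1 / 2 : ℝ) := by
    refine hMup.trans ?_
    gcongr
    linarith
  have hm2 : (m:ℝ) * m = x := by rw [hx]; push_cast; ring
  have hm2' : 2 ≤ (m:ℝ) := by nlinarith
  have hMK : M ≤ m ^ 2 := by
    have : (M:ℝ) ≤ ((m ^ 2 : ℕ) : ℝ) := by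
      rw [← hx]
      rw [hxm] at hM12
      nlinarith
    exact_mod_cast this
  have hr0 : 0 < r := by
    have : (0:ℝ) < r := lt_of_lt_of_le (by positivity) hrlow
    exact_mod_cast this
  have hrm : r < m := by
    have : (r:ℝ) < m := by
      rw [← hxm]
      refine lt_of_le_of_lt hrup ?_
      calc 2 * x ^ β < x ^ (1 / 2 - β) * x ^ β := by gcongr
        _ = x ^ (1 / 2 : ℝ) := by rw [← Real.rpow_add hx0]; congr 1; ring
    exact_mod_cast this
  obtain ⟨hl, hB⟩ := qB_bound (μ := μ) h1 hα1 (by omega) hMup h4 (Nat.le_ceil _)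
  have hA := qA_bound (by linarith) hM18 hM12
  have hXlow : x ^ ε ≤ (r:ℝ) ^ 2 * (M:ℝ) / x := by
    rw [le_div_iff₀ hx0]
    calc x ^ ε * x = (x ^ β) ^ 2 * x ^ α := by
          rw [← Real.rpow_natCast, ← Real.rpow_mul hx0.le, ← Real.rpow_add hx0]
          conv_lhs => rw [← Real.rpow_one x]
          rw [← Real.rpow_mul hx0.le, ← Real.rpow_add hx0]
          congr 1
          rw [hεd]; push_cast; ring
      _ ≤ _ := by gcongr
  have hC := qC_bound (by linarith) hXlow h5
  rw [hx] at hC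
  have hfin := main_finite hm0 (by omega) hMK hr0 hrm ((1 - α) / 3) (by linarith) μ _ hl
    ((r:ℝ) ^ 2 * (M:ℝ) / ((m ^ 2 : ℕ) : ℝ)) x _ _ _ hx rfl hA hB hC
  refine le_trans (le_of_eq ?_) hfin
  rw [← hx, Real.rpow_neg hx0.le, Real.rpow_one]
  field_simp
  ring
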